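/- arXiv:2604.27397 — 3 statements merged into one kernel-verified Lean document; each statement's English description precedes it below -/
import Mathlib

section
/- Embedding pairs of elements of Cl(0,n) into Cl(0,n+1) via (u,v) ↦ u + i_{n+1} v, for Lipschitz spinors κ_m = (ξ_m, η_m) with z_m = ξ_m + i_{n+1} η_m, one has conj(z_1) z_2 = ⟨κ_1, κ_2⟩ + i_{n+1} {κ_1, κ_2}, where ⟨·,·⟩ is the generalised Hermitian form and {·,·} the bracket. -/
open CliffordAlgebra

noncomputable section

namespace PaperCliff

noncomputable instance : Invertible (2 : ℝ) := invertibleOfNonzero two_ne_zero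

/-- The quadratic form on `ℝ^{p,q}`: `p` generators of square `+1`, `q` of square `-1`. -/
def sigQ (p q : ℕ) : QuadraticForm ℝ (Fin (p + q) → ℝ) :=
  QuadraticMap.weightedSumSquares ℝ
    (fun i : Fin (p + q) => if (i : ℕ) < p then (1 : ℝ) else -1)

/-- The negative-definite quadratic form for `Cl(0,n)`. -/
def negQ (n : ℕ) : QuadraticForm ℝ (Fin n → ℝ) :=
  QuadraticMap.weightedSumSquares ℝ (fun _ : Fin n => (-1 : ℝ))

variable {M : Type*} [AddCommGroup M] [Module ℝ M]

/-- Clifford conjugation: composite of the grade involution and reversal. -/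
def cconj {Q : QuadraticForm ℝ M} (x : CliffordAlgebra Q) : CliffordAlgebra Q :=
  reverse (involute x)

/-- The paravectors `ℝ ⊕ ℝ^{p,q}` inside the Clifford algebra. -/
def paravec (Q : QuadraticForm ℝ M) : Submodule ℝ (CliffordAlgebra Q) :=
  LinearMap.range (Algebra.linearMap ℝ (CliffordAlgebra Q)) ⊔ LinearMap.range (ι Q)

/-- The real (degree-zero) component of an element of the Clifford algebra,
via the canonical linear isomorphism with the exterior algebra. -/
def clRe {Q : QuadraticForm ℝ M} (x : CliffordAlgebra Q) : ℝ :=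
  ExteriorAlgebra.algebraMapInv (CliffordAlgebra.equivExterior Q x)

/-- The reduced basis monomial `i_{j₁} ⋯ i_{j_k}` for a finite set of indices (in
increasing order). -/
def mono {m : ℕ} (Q : QuadraticForm ℝ (Fin m → ℝ)) (s : Finset (Fin m)) :
    CliffordAlgebra Q :=
  ((s.sort (· ≤ ·)).map fun j => ι Q (Pi.single j 1)).prod

/-- The (paravector) Lipschitz group, as a subgroup of the units: the group generated by
invertible paravectors. -/
def lipUnits (Q : QuadraticForm ℝ M) : Subgroup (CliffordAlgebra Q)ˣ :=
  Subgroup.closure {u : (CliffordAlgebra Q)ˣ | (u : CliffordAlgebra Q) ∈ paravec Q}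

/-- The underlying set of the paravector Lipschitz group `$Γ`. -/
def lipGrp (Q : QuadraticForm ℝ M) : Set (CliffordAlgebra Q) :=
  {x | ∃ u ∈ lipUnits Q, (u : CliffordAlgebra Q) = x}

/-- The Lipschitz monoid `$Γ^▷ = $Γ ∪ {0}`. -/
def lipMon (Q : QuadraticForm ℝ M) : Set (CliffordAlgebra Q) :=
  insert 0 (lipGrp Q)

/-- A Lipschitz spinor: a pair of elements of the Lipschitz monoid, not both zero,
with `ξ ⬝ conj η` a paravector. -/
def IsSpinor (Q : QuadraticForm ℝ M) (ξ η : CliffordAlgebra Q) : Prop :=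
  ξ ∈ lipMon Q ∧ η ∈ lipMon Q ∧ ¬(ξ = 0 ∧ η = 0) ∧ ξ * cconj η ∈ paravec Q

/-- Membership in `SL(2, $Γ)`: entries in the Lipschitz monoid, pseudo-determinant
`a^* d - c^* b = 1`, and `a b^*, c d^*, c^* a, d^* b` paravectors. -/
def IsSL2 (Q : QuadraticForm ℝ M) (a b c d : CliffordAlgebra Q) : Prop :=
  a ∈ lipMon Q ∧ b ∈ lipMon Q ∧ c ∈ lipMon Q ∧ d ∈ lipMon Q ∧
    reverse a * d - reverse c * b = 1 ∧
    a * reverse b ∈ paravec Q ∧ c * reverse d ∈ paravec Q ∧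
    reverse c * a ∈ paravec Q ∧ reverse d * b ∈ paravec Q

/-- The linear inclusion `ℝⁿ → ℝⁿ⁺¹` (appending a zero last coordinate). -/
def inclLin (n : ℕ) : (Fin n → ℝ) →ₗ[ℝ] (Fin (n + 1) → ℝ) where
  toFun v := fun i => if h : (i : ℕ) < n then v ⟨i, h⟩ else 0
  map_add' a b := by funext i; by_cases h : (i : ℕ) < n <;> simp [h]
  map_smul' r a := by funext i; by_cases h : (i : ℕ) < n <;> simp [h]

/-- The inclusion `ℝ^{0,n} → ℝ^{0,n+1}` as an isometry of quadratic forms. -/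
def inclIso (n : ℕ) : negQ n →qᵢ negQ (n + 1) where
  toLinearMap := inclLin n
  map_app' v := by
    simp only [negQ, QuadraticMap.weightedSumSquares_apply, inclLin, LinearMap.coe_mk,
      AddHom.coe_mk]
    rw [Fin.sum_univ_castSucc]
    have h1 : ∀ j : Fin n, ((Fin.castSucc j : Fin (n + 1)) : ℕ) < n := fun j => j.isLt
    simp [Fin.is_lt, Fin.castSucc]

/-! A vector orthogonal to the smaller space anticommutes with all of its vectors, so moving it past
an element of the smaller Clifford algebra applies the grade involution. Conjugation followed by
the grade involution is reversal: this is how `^*` enters the bracket. -/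

section Isometry

variable {R M₁ M₂ : Type*} [CommRing R] [AddCommGroup M₁] [Module R M₁] [AddCommGroup M₂]
  [Module R M₂] {Q₁ : QuadraticForm R M₁} {Q₂ : QuadraticForm R M₂}

theorem involute_star (x : CliffordAlgebra Q₁) : involute (star x) = reverse x := by
  rw [star_def', involute_involute]

theorem star_map_apply (f : Q₁ →qᵢ Q₂) (x : CliffordAlgebra Q₁) :
    star (CliffordAlgebra.map f x) = CliffordAlgebra.map f (star x) := by
  induction x using CliffordAlgebra.induction with
  | algebraMap r => simp
  | ι v => simp
  | mul x y hx hy => simp only [map_mul, star_mul, hx, hy]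
  | add x y hx hy => simp only [map_add, star_add, hx, hy]

theorem map_mul_ι_of_isOrtho (f : Q₁ →qᵢ Q₂) {e : M₂} (he : ∀ v, Q₂.IsOrtho (f v) e)
    (x : CliffordAlgebra Q₁) :
    CliffordAlgebra.map f x * ι Q₂ e = ι Q₂ e * CliffordAlgebra.map f (involute x) := by
  induction x using CliffordAlgebra.induction with
  | algebraMap r => simp only [AlgHom.commutes, Algebra.commutes]
  | ι v => rw [involute_ι, map_neg, map_apply_ι, ι_mul_ι_comm_of_isOrtho (he v), mul_neg]
  | mul x y hx hy => rw [map_mul, mul_assoc, hy, ← mul_assoc, hx, mul_assoc, map_mul, map_mul]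
  | add x y hx hy => simp only [map_add, add_mul, mul_add, hx, hy]

theorem star_map_add_ι_mul_map (f : Q₁ →qᵢ Q₂) {e : M₂} (he : ∀ v, Q₂.IsOrtho (f v) e)
    (u v : CliffordAlgebra Q₁) :
    star (CliffordAlgebra.map f u + ι Q₂ e * CliffordAlgebra.map f v) =
      CliffordAlgebra.map f (star u) - ι Q₂ e * CliffordAlgebra.map f (reverse v) := by
  rw [star_add, star_mul, star_ι, mul_neg, ← sub_eq_add_neg, star_map_apply, star_map_apply,
    map_mul_ι_of_isOrtho f he, involute_star]

theorem map_add_ι_mul_map_mul (f : Q₁ →qᵢ Q₂) {e : M₂} (he : ∀ v, Q₂.IsOrtho (f v) e)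
    (u₁ v₁ u₂ v₂ : CliffordAlgebra Q₁) :
    (CliffordAlgebra.map f u₁ + ι Q₂ e * CliffordAlgebra.map f v₁) *
        (CliffordAlgebra.map f u₂ + ι Q₂ e * CliffordAlgebra.map f v₂) =
      CliffordAlgebra.map f (u₁ * u₂ + Q₂ e • (involute v₁ * v₂)) +
        ι Q₂ e * CliffordAlgebra.map f (involute u₁ * v₂ + v₁ * u₂) := by
  have cross_term : CliffordAlgebra.map f u₁ * (ι Q₂ e * CliffordAlgebra.map f v₂) =
      ι Q₂ e * CliffordAlgebra.map f (involute u₁ * v₂) := by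
    rw [← mul_assoc, map_mul_ι_of_isOrtho f he, mul_assoc, ← map_mul]
  have square_term : ι Q₂ e * CliffordAlgebra.map f v₁ * (ι Q₂ e * CliffordAlgebra.map f v₂) =
      CliffordAlgebra.map f (Q₂ e • (involute v₁ * v₂)) := by
    rw [mul_assoc, ← mul_assoc (CliffordAlgebra.map f v₁), map_mul_ι_of_isOrtho f he, mul_assoc,
      ← mul_assoc, ι_sq_scalar, ← map_mul, ← Algebra.smul_def, map_smul]
  rw [add_mul, mul_add, mul_add, cross_term, square_term]
  simp only [map_add, map_mul, mul_add, mul_assoc]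
  abel

theorem embed_product_formula_general (f : Q₁ →qᵢ Q₂) {e : M₂} (he : ∀ v, Q₂.IsOrtho (f v) e)
    (ξ₁ η₁ ξ₂ η₂ : CliffordAlgebra Q₁) :
    star (CliffordAlgebra.map f ξ₁ + ι Q₂ e * CliffordAlgebra.map f η₁) *
        (CliffordAlgebra.map f ξ₂ + ι Q₂ e * CliffordAlgebra.map f η₂) =
      CliffordAlgebra.map f (star ξ₁ * ξ₂ - Q₂ e • (star η₁ * η₂)) +
        ι Q₂ e * CliffordAlgebra.map f (reverse ξ₁ * η₂ - reverse η₁ * ξ₂) := by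
  rw [star_map_add_ι_mul_map f he, sub_eq_add_neg, ← mul_neg, ← map_neg,
    map_add_ι_mul_map_mul f he]
  simp only [involute_star, map_neg involute, ← star_def', neg_mul, smul_neg, ← sub_eq_add_neg]

end Isometry

section WeightedSumSquares

variable {I R S : Type*} [Fintype I] [DecidableEq I] [CommSemiring R] [Monoid S]
  [DistribMulAction S R] [SMulCommClass S R R] (w : I → S)

theorem weightedSumSquares_single (i : I) (r : R) :
    QuadraticMap.weightedSumSquares R w (Pi.single i r) = w i • (r * r) := by
  simp [QuadraticMap.weightedSumSquares_apply, Pi.single_apply]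

theorem isOrtho_weightedSumSquares_single {v : I → R} {i : I} (hv : v i = 0) (r : R) :
    (QuadraticMap.weightedSumSquares R w).IsOrtho v (Pi.single i r) := by
  simp only [QuadraticMap.isOrtho_def, QuadraticMap.weightedSumSquares_apply,
    ← Finset.sum_add_distrib]
  refine Finset.sum_congr rfl fun j _ => ?_
  obtain rfl | hj := eq_or_ne j i
  · simp [hv]
  · simp [hj]

end WeightedSumSquares

theorem cconj_eq_star {Q : QuadraticForm ℝ M} (x : CliffordAlgebra Q) : cconj x = star x :=
  rfl

theorem negQ_single_one {n : ℕ} (i : Fin n) : negQ n (Pi.single i 1) = -1 := by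
  rw [negQ, weightedSumSquares_single, smul_eq_mul, mul_one, mul_one]

theorem inclIso_apply_last {n : ℕ} (v : Fin n → ℝ) : inclIso n v (Fin.last n) = 0 :=
  dif_neg (lt_irrefl n)

theorem isOrtho_inclIso_single_last {n : ℕ} (v : Fin n → ℝ) :
    (negQ (n + 1)).IsOrtho (inclIso n v) (Pi.single (Fin.last n) 1) :=
  isOrtho_weightedSumSquares_single _ (inclIso_apply_last v) 1

/-- Embedding pairs of elements of `Cl(0,n)` into `Cl(0,n+1)` via
`(u,v) ↦ u + i_{n+1} v`, for Lipschitz spinors `κₘ = (ξₘ, ηₘ)` with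
`zₘ = ξₘ + i_{n+1} ηₘ` one has `conj(z₁) z₂ = ⟨κ₁, κ₂⟩ + i_{n+1} {κ₁, κ₂}`. -/
theorem embed_product_formula (n : ℕ) (ξ₁ η₁ ξ₂ η₂ : CliffordAlgebra (negQ n))
    (h₁ : IsSpinor (negQ n) ξ₁ η₁) (h₂ : IsSpinor (negQ n) ξ₂ η₂) :
    cconj (CliffordAlgebra.map (inclIso n) ξ₁ +
        ι (negQ (n + 1)) (Pi.single (Fin.last n) 1) * CliffordAlgebra.map (inclIso n) η₁) *
      (CliffordAlgebra.map (inclIso n) ξ₂ +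
        ι (negQ (n + 1)) (Pi.single (Fin.last n) 1) * CliffordAlgebra.map (inclIso n) η₂) =
    CliffordAlgebra.map (inclIso n) (cconj ξ₁ * ξ₂ + cconj η₁ * η₂) +
      ι (negQ (n + 1)) (Pi.single (Fin.last n) 1) *
        CliffordAlgebra.map (inclIso n) (reverse ξ₁ * η₂ - reverse η₁ * ξ₂) := by
  simpa only [cconj_eq_star, negQ_single_one, neg_one_smul, sub_neg_eq_add] using
    embed_product_formula_general (inclIso n) isOrtho_inclIso_single_last ξ₁ η₁ ξ₂ η₂

end PaperCliff
end
end

section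
/- For a Lipschitz spinor κ = (ξ,η) with |κ|^2 = |ξ|^2 + |η|^2, the matrix A_κ = [[ξ, −η'/|κ|^2],[η, ξ'/|κ|^2]] is an element of SL(2, $Γ_{n+1}); in particular its pseudo-determinant ξ^*(ξ'/|κ|^2) + η^*(η'/|κ|^2) equals 1. -/
open CliffordAlgebra

noncomputable section

namespace PaperCliff

variable {M : Type*} [AddCommGroup M] [Module ℝ M]

/-!
Products of invertible paravectors satisfy `x * cconj x = cconj x * x ∈ ℝ`, and conjugating a
paravector, `p ↦ reverse x * p * x`, gives a paravector because for a paravector `x` this is a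
scaled reflection. Applied to `p = ξ * cconj η` and `x = η`, it turns the spinor condition into
`reverse η * ξ ∈ paravec Q`; up to real factors, the other paravectors required are
`ξ * cconj η` itself and the Clifford conjugates of these two. The pseudo-determinant is
`(|ξ|² + |η|²) / |κ|²`, since `reverse x * involute x` is the grade involution of `cconj x * x`.
-/

section CliffordConjugation

variable {Q : QuadraticForm ℝ M}

lemma cconj_add (x y : CliffordAlgebra Q) : cconj (x + y) = cconj x + cconj y := by
  simp [cconj]

lemma cconj_mul (x y : CliffordAlgebra Q) : cconj (x * y) = cconj y * cconj x := by
  simp [cconj]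

lemma cconj_cconj (x : CliffordAlgebra Q) : cconj (cconj x) = x := by
  simp [cconj, reverse_involute]

lemma cconj_reverse (x : CliffordAlgebra Q) : cconj (reverse x) = involute x := by
  simp [cconj, reverse_involute]

lemma involute_cconj (x : CliffordAlgebra Q) : involute (cconj x) = reverse x := by
  simp [cconj, reverse_involute]

lemma cconj_eq_zero {x : CliffordAlgebra Q} : cconj x = 0 ↔ x = 0 :=
  ⟨fun h => by rw [← cconj_cconj x, h]; simp [cconj], fun h => by simp [h, cconj]⟩

lemma cconj_algebraMap_add_ι (a : ℝ) (v : M) :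
    cconj (algebraMap ℝ (CliffordAlgebra Q) a + ι Q v) = algebraMap ℝ _ a - ι Q v := by
  simp [cconj, reverse.commutes, sub_eq_add_neg]

end CliffordConjugation

section NormSq

variable {Q : QuadraticForm ℝ M} {x y : CliffordAlgebra Q}

/-- The squared norm `|x|²`, encoded as the real part of `x * cconj x`. It is the paper's norm on
the Lipschitz monoid, where `x * cconj x` is real; elsewhere non-real parts are discarded. -/
def normSq (x : CliffordAlgebra Q) : ℝ :=
  clRe (x * cconj x)

lemma clRe_algebraMap (r : ℝ) : clRe (algebraMap ℝ (CliffordAlgebra Q) r) = r := by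
  simp [clRe, equivExterior, changeForm_algebraMap, ExteriorAlgebra.algebraMapInv]

lemma normSq_eq_of_mul_cconj_eq {r : ℝ} (h : x * cconj x = algebraMap ℝ _ r) : normSq x = r := by
  rw [normSq, h, clRe_algebraMap]

lemma normSq_zero : normSq (0 : CliffordAlgebra Q) = 0 :=
  normSq_eq_of_mul_cconj_eq (by simp)

lemma mul_mul_cconj_mul {r s : ℝ} (hx : x * cconj x = algebraMap ℝ _ r)
    (hy : y * cconj y = algebraMap ℝ _ s) : x * y * cconj (x * y) = algebraMap ℝ _ (r * s) :=
  calc x * y * cconj (x * y) = x * (y * cconj y) * cconj x := by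
        simp only [cconj_mul, mul_assoc]
    _ = x * cconj x * algebraMap ℝ _ s := by
        rw [hy, mul_assoc, Algebra.commutes, mul_assoc]
    _ = algebraMap ℝ _ (r * s) := by rw [hx, map_mul]

end NormSq

section Paravectors

variable {Q : QuadraticForm ℝ M} {x y p : CliffordAlgebra Q}

lemma mem_paravec : x ∈ paravec Q ↔ ∃ (a : ℝ) (v : M), algebraMap ℝ _ a + ι Q v = x := by
  simp [paravec, Submodule.mem_sup]

lemma algebraMap_mem_paravec (r : ℝ) : algebraMap ℝ (CliffordAlgebra Q) r ∈ paravec Q :=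
  mem_paravec.2 ⟨r, 0, by simp⟩

lemma reverse_eq_self_of_mem_paravec (hx : x ∈ paravec Q) : reverse x = x := by
  obtain ⟨a, v, rfl⟩ := mem_paravec.1 hx
  simp [reverse.commutes]

lemma involute_mem_paravec (hx : x ∈ paravec Q) : involute x ∈ paravec Q := by
  obtain ⟨a, v, rfl⟩ := mem_paravec.1 hx
  exact mem_paravec.2 ⟨a, -v, by simp⟩

lemma cconj_mem_paravec (hx : x ∈ paravec Q) : cconj x ∈ paravec Q := by
  rw [cconj, reverse_eq_self_of_mem_paravec (involute_mem_paravec hx)]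
  exact involute_mem_paravec hx

lemma algebraMap_add_ι_mul_cconj (a : ℝ) (v : M) :
    (algebraMap ℝ _ a + ι Q v) * cconj (algebraMap ℝ _ a + ι Q v) =
      algebraMap ℝ _ (a ^ 2 - Q v) := by
  rw [cconj_algebraMap_add_ι,
    ← (Algebra.commute_algebraMap_left a (ι Q v)).mul_self_sub_mul_self_eq, ι_sq_scalar, map_sub,
    map_pow, sq]

lemma normSq_algebraMap_add_ι (a : ℝ) (v : M) :
    normSq (algebraMap ℝ _ a + ι Q v) = a ^ 2 - Q v :=
  normSq_eq_of_mul_cconj_eq (algebraMap_add_ι_mul_cconj a v)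

lemma mul_cconj_of_mem_paravec (hx : x ∈ paravec Q) :
    x * cconj x = algebraMap ℝ _ (normSq x) := by
  obtain ⟨a, v, rfl⟩ := mem_paravec.1 hx
  rw [algebraMap_add_ι_mul_cconj, normSq_algebraMap_add_ι]

lemma normSq_nonneg_of_mem_paravec (hQ : ∀ v, Q v ≤ 0) (hx : x ∈ paravec Q) : 0 ≤ normSq x := by
  obtain ⟨a, v, rfl⟩ := mem_paravec.1 hx
  rw [normSq_algebraMap_add_ι]
  linarith [sq_nonneg a, hQ v]

lemma mul_cconj_add_mul_cconj_of_mem_paravec (hx : x ∈ paravec Q) (hy : y ∈ paravec Q) :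
    x * cconj y + y * cconj x = algebraMap ℝ _ (normSq (x + y) - normSq x - normSq y) := by
  rw [map_sub, map_sub, ← mul_cconj_of_mem_paravec (add_mem hx hy),
    ← mul_cconj_of_mem_paravec hx, ← mul_cconj_of_mem_paravec hy, cconj_add]
  noncomm_ring

lemma mul_mul_self_mem_paravec (hx : x ∈ paravec Q) (hp : p ∈ paravec Q) :
    x * p * x ∈ paravec Q := by
  obtain ⟨r, hr⟩ : ∃ r : ℝ, p * x + cconj x * cconj p = algebraMap ℝ _ r :=
    ⟨_, by simpa only [cconj_cconj] using
      mul_cconj_add_mul_cconj_of_mem_paravec hp (cconj_mem_paravec hx)⟩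
  have reflection : x * p * x = r • x - normSq x • cconj p :=
    calc x * p * x = x * (p * x + cconj x * cconj p) - x * cconj x * cconj p := by noncomm_ring
      _ = r • x - normSq x • cconj p := by
        rw [hr, mul_cconj_of_mem_paravec hx, ← Algebra.commutes, Algebra.smul_def,
          Algebra.smul_def]
  rw [reflection]
  exact sub_mem (Submodule.smul_mem _ _ hx) (Submodule.smul_mem _ _ (cconj_mem_paravec hp))

end Paravectors

section LipschitzGroup

variable {Q : QuadraticForm ℝ M} {x p : CliffordAlgebra Q}

lemma normSq_ne_zero_of_isUnit (hx : IsUnit x) (h : x * cconj x = algebraMap ℝ _ (normSq x)) :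
    normSq x ≠ 0 := by
  intro h0
  rw [h0, map_zero, hx.mul_right_eq_zero, cconj_eq_zero] at h
  exact hx.ne_zero h

lemma inv_mem_paravec {u : (CliffordAlgebra Q)ˣ} (hu : (u : CliffordAlgebra Q) ∈ paravec Q) :
    (↑u⁻¹ : CliffordAlgebra Q) ∈ paravec Q := by
  have hN := mul_cconj_of_mem_paravec hu
  have inv_eq : (↑u⁻¹ : CliffordAlgebra Q) = (normSq (u : CliffordAlgebra Q))⁻¹ • cconj ↑u := by
    apply Units.inv_eq_of_mul_eq_one_right
    rw [mul_smul_comm, hN, Algebra.smul_def, ← map_mul,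
      inv_mul_cancel₀ (normSq_ne_zero_of_isUnit u.isUnit hN), map_one]
  rw [inv_eq]
  exact Submodule.smul_mem _ _ (cconj_mem_paravec hu)

@[elab_as_elim]
lemma lipGrp_induction {motive : CliffordAlgebra Q → Prop}
    (of_paravec : ∀ x, IsUnit x → x ∈ paravec Q → motive x)
    (mul : ∀ x y, motive x → motive y → motive (x * y)) (hx : x ∈ lipGrp Q) : motive x := by
  obtain ⟨u, hu, rfl⟩ := hx
  induction hu using Subgroup.closure_induction'' with
  | mem u hu => exact of_paravec u u.isUnit hu
  | inv_mem u hu => exact of_paravec _ u⁻¹.isUnit (inv_mem_paravec hu)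
  | one => exact of_paravec 1 isUnit_one (by simpa using algebraMap_mem_paravec (Q := Q) 1)
  | mul u v _ _ hu hv => exact mul u v hu hv

lemma isUnit_of_mem_lipGrp (hx : x ∈ lipGrp Q) : IsUnit x := by
  obtain ⟨u, -, rfl⟩ := hx
  exact u.isUnit

lemma mul_cconj_of_mem_lipGrp (hx : x ∈ lipGrp Q) : x * cconj x = algebraMap ℝ _ (normSq x) := by
  suffices ∃ r : ℝ, x * cconj x = algebraMap ℝ _ r by
    obtain ⟨r, hr⟩ := this
    rw [normSq_eq_of_mul_cconj_eq hr, hr]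
  refine lipGrp_induction (fun x _ hx => ⟨_, mul_cconj_of_mem_paravec hx⟩) ?_ hx
  rintro x y ⟨r, hr⟩ ⟨s, hs⟩
  exact ⟨r * s, mul_mul_cconj_mul hr hs⟩

lemma cconj_mul_of_mem_lipGrp (hx : x ∈ lipGrp Q) : cconj x * x = algebraMap ℝ _ (normSq x) := by
  apply (isUnit_of_mem_lipGrp hx).mul_left_cancel
  rw [← mul_assoc, mul_cconj_of_mem_lipGrp hx, Algebra.commutes]

lemma normSq_ne_zero_of_mem_lipGrp (hx : x ∈ lipGrp Q) : normSq x ≠ 0 :=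
  normSq_ne_zero_of_isUnit (isUnit_of_mem_lipGrp hx) (mul_cconj_of_mem_lipGrp hx)

lemma normSq_pos_of_mem_lipGrp (hQ : ∀ v, Q v ≤ 0) (hx : x ∈ lipGrp Q) : 0 < normSq x := by
  suffices ∃ r : ℝ, 0 ≤ r ∧ x * cconj x = algebraMap ℝ _ r by
    obtain ⟨r, hr, hxr⟩ := this
    exact (normSq_eq_of_mul_cconj_eq hxr ▸ hr).lt_of_ne' (normSq_ne_zero_of_mem_lipGrp hx)
  refine lipGrp_induction (fun x _ hx =>
    ⟨_, normSq_nonneg_of_mem_paravec hQ hx, mul_cconj_of_mem_paravec hx⟩) ?_ hx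
  rintro x y ⟨r, hr, hxr⟩ ⟨s, hs, hys⟩
  exact ⟨r * s, mul_nonneg hr hs, mul_mul_cconj_mul hxr hys⟩

lemma reverse_mul_mul_mem_paravec (hx : x ∈ lipGrp Q) (hp : p ∈ paravec Q) :
    reverse x * p * x ∈ paravec Q := by
  suffices ∀ p ∈ paravec Q, reverse x * p * x ∈ paravec Q from this p hp
  refine lipGrp_induction (fun x _ hx p hp => ?_) (fun x y ihx ihy p hp => ?_) hx
  · rw [reverse_eq_self_of_mem_paravec hx]
    exact mul_mul_self_mem_paravec hx hp
  · simpa only [reverse.map_mul, mul_assoc] using ihy _ (ihx p hp)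

end LipschitzGroup

section LipschitzMonoid

variable {Q : QuadraticForm ℝ M} {x y : CliffordAlgebra Q}

lemma involute_mem_lipMon (hx : x ∈ lipMon Q) : involute x ∈ lipMon Q := by
  rcases hx with rfl | ⟨u, hu, rfl⟩
  · exact .inl (map_zero _)
  · let φ := Units.map (involute (Q := Q)).toMonoidHom
    have hφ : lipUnits Q ≤ (lipUnits Q).comap φ :=
      (Subgroup.closure_le _).2 fun v hv => Subgroup.subset_closure (involute_mem_paravec hv)
    exact .inr ⟨φ u, hφ hu, rfl⟩

lemma smul_mem_lipMon (r : ℝ) (hx : x ∈ lipMon Q) : r • x ∈ lipMon Q := by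
  rcases eq_or_ne r 0 with rfl | hr
  · exact .inl (zero_smul _ _)
  rcases hx with rfl | ⟨u, hu, rfl⟩
  · exact .inl (smul_zero _)
  · let c := Units.map (algebraMap ℝ (CliffordAlgebra Q)).toMonoidHom (Units.mk0 r hr)
    have hc : c ∈ lipUnits Q := Subgroup.subset_closure (algebraMap_mem_paravec r)
    exact .inr ⟨c * u, mul_mem hc hu, (Algebra.smul_def r _).symm⟩

lemma reverse_mul_involute_of_mem_lipMon (hx : x ∈ lipMon Q) :
    reverse x * involute x = algebraMap ℝ _ (normSq x) := by
  rcases hx with rfl | hx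
  · simp [normSq_zero]
  · rw [← involute_cconj, ← map_mul, cconj_mul_of_mem_lipGrp hx, AlgHom.commutes]

lemma normSq_nonneg_of_mem_lipMon (hQ : ∀ v, Q v ≤ 0) (hx : x ∈ lipMon Q) : 0 ≤ normSq x := by
  rcases hx with rfl | hx
  · exact normSq_zero.ge
  · exact (normSq_pos_of_mem_lipGrp hQ hx).le

lemma normSq_pos_of_mem_lipMon (hQ : ∀ v, Q v ≤ 0) (hx : x ∈ lipMon Q) (hx0 : x ≠ 0) :
    0 < normSq x :=
  normSq_pos_of_mem_lipGrp hQ (hx.resolve_left hx0)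

lemma reverse_mul_mem_paravec (hy : y ∈ lipMon Q) (h : x * cconj y ∈ paravec Q) :
    reverse y * x ∈ paravec Q := by
  rcases hy with rfl | hy
  · simp
  · have sandwich : reverse y * (x * cconj y) * y = normSq y • (reverse y * x) := by
      rw [← mul_assoc, mul_assoc _ (cconj y), cconj_mul_of_mem_lipGrp hy, ← Algebra.commutes,
        Algebra.smul_def]
    rw [← Submodule.smul_mem_iff _ (normSq_ne_zero_of_mem_lipGrp hy), ← sandwich]
    exact reverse_mul_mul_mem_paravec hy h

end LipschitzMonoid

namespace IsSpinor

variable {Q : QuadraticForm ℝ M} {ξ η : CliffordAlgebra Q}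

lemma mul_cconj_mem_paravec_swap (h : IsSpinor Q ξ η) : η * cconj ξ ∈ paravec Q := by
  simpa only [cconj_mul, cconj_cconj] using cconj_mem_paravec h.2.2.2

lemma reverse_mul_mem_paravec (h : IsSpinor Q ξ η) : reverse η * ξ ∈ paravec Q :=
  PaperCliff.reverse_mul_mem_paravec h.2.1 h.2.2.2

lemma cconj_mul_involute_mem_paravec (h : IsSpinor Q ξ η) : cconj ξ * involute η ∈ paravec Q := by
  simpa only [cconj_mul, cconj_reverse] using cconj_mem_paravec h.reverse_mul_mem_paravec

lemma normSq_add_normSq_pos (hQ : ∀ v, Q v ≤ 0) (h : IsSpinor Q ξ η) :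
    0 < normSq ξ + normSq η := by
  obtain ⟨hξ, hη, hne, -⟩ := h
  by_cases hξ0 : ξ = 0
  · exact add_pos_of_nonneg_of_pos (normSq_nonneg_of_mem_lipMon hQ hξ)
      (normSq_pos_of_mem_lipMon hQ hη fun hη0 => hne ⟨hξ0, hη0⟩)
  · exact add_pos_of_pos_of_nonneg (normSq_pos_of_mem_lipMon hQ hξ hξ0)
      (normSq_nonneg_of_mem_lipMon hQ hη)

end IsSpinor

lemma pseudoDet_eq_one {Q : QuadraticForm ℝ M} {ξ η : CliffordAlgebra Q} (hξ : ξ ∈ lipMon Q)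
    (hη : η ∈ lipMon Q) (hN : normSq ξ + normSq η ≠ 0) :
    reverse ξ * ((normSq ξ + normSq η)⁻¹ • involute ξ) +
      reverse η * ((normSq ξ + normSq η)⁻¹ • involute η) = 1 := by
  rw [mul_smul_comm, mul_smul_comm, ← smul_add, reverse_mul_involute_of_mem_lipMon hξ,
    reverse_mul_involute_of_mem_lipMon hη, ← map_add, Algebra.smul_def, ← map_mul,
    inv_mul_cancel₀ hN, map_one]

theorem spinor_matrix_in_sl2_general (Q : QuadraticForm ℝ M) (ξ η : CliffordAlgebra Q)
    (h : IsSpinor Q ξ η) (hN : normSq ξ + normSq η ≠ 0) :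
    IsSL2 Q ξ ((normSq ξ + normSq η)⁻¹ • (-(involute η)))
      η ((normSq ξ + normSq η)⁻¹ • involute ξ) ∧
    reverse ξ * ((normSq ξ + normSq η)⁻¹ • involute ξ) +
      reverse η * ((normSq ξ + normSq η)⁻¹ • involute η) = 1 := by
  have ⟨hξ, hη, _, hp⟩ := h
  have hdet := pseudoDet_eq_one hξ hη hN
  refine ⟨⟨hξ, ?b_mem, hη, smul_mem_lipMon _ (involute_mem_lipMon hξ), ?det, ?ab, ?cd,
    h.reverse_mul_mem_paravec, ?db⟩, hdet⟩
  case b_mem =>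
    rw [smul_neg, ← neg_smul]
    exact smul_mem_lipMon _ (involute_mem_lipMon hη)
  case det =>
    rwa [smul_neg, mul_neg, sub_neg_eq_add]
  case ab =>
    rw [map_smul, map_neg, mul_smul_comm, mul_neg]
    exact Submodule.smul_mem _ _ (neg_mem hp)
  case cd =>
    rw [map_smul, mul_smul_comm]
    exact Submodule.smul_mem _ _ h.mul_cconj_mem_paravec_swap
  case db =>
    rw [map_smul, smul_mul_smul_comm, mul_neg]
    exact Submodule.smul_mem _ _ (neg_mem h.cconj_mul_involute_mem_paravec)

lemma negQ_nonpos (n : ℕ) (v : Fin n → ℝ) : negQ n v ≤ 0 := by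
  simp only [negQ, QuadraticMap.weightedSumSquares_apply, neg_smul, one_smul]
  exact Finset.sum_nonpos fun i _ => neg_nonpos.2 (mul_self_nonneg (v i))

/-- For a Lipschitz spinor `κ = (ξ,η)` with `|κ|² = |ξ|² + |η|²`, the
matrix `A_κ = [[ξ, −η'/|κ|²],[η, ξ'/|κ|²]]` lies in `SL(2, $Γ_{n+1})`; in particular its
pseudo-determinant `ξ^*(ξ'/|κ|²) + η^*(η'/|κ|²)` equals `1`. -/
theorem spinor_matrix_in_sl2 (n : ℕ) (ξ η : CliffordAlgebra (negQ n))
    (h : IsSpinor (negQ n) ξ η) :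
    IsSL2 (negQ n) ξ ((clRe (ξ * cconj ξ) + clRe (η * cconj η))⁻¹ • (-(involute η)))
      η ((clRe (ξ * cconj ξ) + clRe (η * cconj η))⁻¹ • involute ξ) ∧
    reverse ξ * ((clRe (ξ * cconj ξ) + clRe (η * cconj η))⁻¹ • involute ξ) +
      reverse η * ((clRe (ξ * cconj ξ) + clRe (η * cconj η))⁻¹ • involute η) = 1 :=
  spinor_matrix_in_sl2_general (negQ n) ξ η h (h.normSq_add_normSq_pos (negQ_nonpos n)).ne'

end PaperCliff
end
end

section
/- Noncommutative Ptolemy relation: for four Lipschitz spinors κ_j = (ξ_j, η_j), j = 1,...,4, with pairwise brackets λ_{jk} = {κ_j, κ_k} = ξ_j^* η_k − η_j^* ξ_k all invertible as required, the identity λ_{31}^{-1} λ_{23}^* λ_{42}^{-1} λ_{14}^* + λ_{31}^{-1} λ_{43}^* λ_{24}^{-1} λ_{12}^* = 1 holds. -/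
open CliffordAlgebra

noncomputable section

namespace PaperCliff

variable {M : Type*} [AddCommGroup M] [Module ℝ M]

/-!
The bracket is a skew-hermitian form on the right module of pairs `(ξ, η)`: it is right-linear in
its second argument and satisfies `λⱼₖ = -λₖⱼ^*`. A Lipschitz spinor `κ` is isotropic for it,
because reversal fixes paravectors and `conj(η) η` is a real scalar; as one of its entries is
invertible, its orthogonal complement is exactly the line of its right multiples. Hence `κ₂` and
`κ₄` span the module, and pairing with each of them gives Cramer's rule
`κ₁ = κ₂ λ₄₂⁻¹ λ₄₁ + κ₄ λ₂₄⁻¹ λ₂₁`. Pairing this with `κ₃` yields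
`λ₃₁ = λ₃₂ λ₄₂⁻¹ λ₄₁ + λ₃₄ λ₂₄⁻¹ λ₂₁`, and the two signs introduced in each summand by
`λⱼₖ = -λₖⱼ^*` cancel.
-/

open scoped RightActions

section RightModule

variable {A V : Type*} [Ring A] [AddCommGroup V] [Module Aᵐᵒᵖ V]

theorem eq_smul_add_smul_of_ker_subset {f g : V →ₗ[Aᵐᵒᵖ] A} {x y : V}
    (hker : ∀ v, f v = 0 → ∃ a : A, v = x <• a) (hfy : IsUnit (f y)) (hgx : IsUnit (g x))
    (hgy : g y = 0) (v : V) :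
    v = x <• (Ring.inverse (g x) * g v) + y <• (Ring.inverse (f y) * f v) := by
  obtain ⟨a, ha⟩ := hker (v - y <• (Ring.inverse (f y) * f v)) <| by
    rw [map_sub, map_smul, op_smul_eq_mul, Ring.mul_inverse_cancel_left _ _ hfy, sub_self]
  have hgv : g v = g x * a := by
    simpa only [map_sub, map_smul, op_smul_eq_mul, hgy, zero_mul, sub_zero] using congrArg g ha
  rw [hgv, Ring.inverse_mul_cancel_left _ _ hgx, ← ha, sub_add_cancel]

end RightModule

section Bracket

variable {R N : Type*} [CommRing R] [AddCommGroup N] [Module R N] {Q : QuadraticForm R N}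

/-- The bracket `{κ, κ'} = ξ^* η' - η^* ξ'` of the pairs `κ = (ξ, η)` and `κ' = (ξ', η')`,
encoded as a map in `κ'` that is linear for multiplication by Clifford numbers on the right,
that is, over the opposite algebra. -/
def bracket (κ : CliffordAlgebra Q × CliffordAlgebra Q) :
    CliffordAlgebra Q × CliffordAlgebra Q →ₗ[(CliffordAlgebra Q)ᵐᵒᵖ] CliffordAlgebra Q where
  toFun κ' := reverse κ.1 * κ'.2 - reverse κ.2 * κ'.1
  map_add' v w := by simp only [Prod.fst_add, Prod.snd_add, mul_add, add_sub_add_comm]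
  map_smul' a v := by
    simp only [Prod.smul_fst, Prod.smul_snd, mul_smul_comm, smul_sub, RingHom.id_apply]

theorem bracket_apply (κ κ' : CliffordAlgebra Q × CliffordAlgebra Q) :
    bracket κ κ' = reverse κ.1 * κ'.2 - reverse κ.2 * κ'.1 :=
  rfl

theorem bracket_swap_swap (κ κ' : CliffordAlgebra Q × CliffordAlgebra Q) :
    bracket κ.swap κ'.swap = -bracket κ κ' := by
  simp only [bracket_apply, Prod.fst_swap, Prod.snd_swap, neg_sub]

theorem reverse_bracket (κ κ' : CliffordAlgebra Q × CliffordAlgebra Q) :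
    reverse (bracket κ κ') = -bracket κ' κ := by
  simp only [bracket_apply, map_sub, reverse.map_mul, reverse_reverse, neg_sub]

theorem isUnit_reverse {x : CliffordAlgebra Q} (hx : IsUnit x) : IsUnit (reverse x) :=
  (hx.map reverseOp).unop

theorem isUnit_bracket_symm {κ κ' : CliffordAlgebra Q × CliffordAlgebra Q}
    (h : IsUnit (bracket κ κ')) : IsUnit (bracket κ' κ) := by
  rw [← IsUnit.neg_iff, ← reverse_bracket]
  exact isUnit_reverse h

theorem exists_eq_smul_of_bracket_eq_zero_of_isUnit_fst
    {κ v : CliffordAlgebra Q × CliffordAlgebra Q} (hunit : IsUnit κ.1)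
    (hself : bracket κ κ = 0) (hv : bracket κ v = 0) :
    ∃ a : CliffordAlgebra Q, v = κ <• a := by
  obtain ⟨ξ, η⟩ := κ
  obtain ⟨u, rfl⟩ : IsUnit ξ := hunit
  rw [bracket_apply, sub_eq_zero] at hself hv
  refine ⟨↑u⁻¹ * v.1, Prod.ext ?_ ?_⟩
  · exact (u.mul_inv_cancel_left v.1).symm
  · refine (isUnit_reverse u.isUnit).mul_left_cancel ?_
    calc reverse (u : CliffordAlgebra Q) * v.2
        = reverse η * v.1 := hv
      _ = reverse η * u * (↑u⁻¹ * v.1) := by rw [mul_assoc, u.mul_inv_cancel_left]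
      _ = reverse (u : CliffordAlgebra Q) * (η * (↑u⁻¹ * v.1)) := by rw [← hself, mul_assoc]

theorem exists_eq_smul_of_bracket_eq_zero {κ v : CliffordAlgebra Q × CliffordAlgebra Q}
    (hunit : IsUnit κ.1 ∨ IsUnit κ.2) (hself : bracket κ κ = 0) (hv : bracket κ v = 0) :
    ∃ a : CliffordAlgebra Q, v = κ <• a := by
  rcases hunit with hfst | hsnd
  · exact exists_eq_smul_of_bracket_eq_zero_of_isUnit_fst hfst hself hv
  · obtain ⟨a, ha⟩ := exists_eq_smul_of_bracket_eq_zero_of_isUnit_fst (κ := κ.swap)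
      (v := v.swap) hsnd (by rw [bracket_swap_swap, hself, neg_zero])
      (by rw [bracket_swap_swap, hv, neg_zero])
    exact ⟨a, Prod.swap_injective ha⟩

theorem noncommutative_ptolemy_general {κ₁ κ₂ κ₃ κ₄ : CliffordAlgebra Q × CliffordAlgebra Q}
    (hunit : IsUnit κ₂.1 ∨ IsUnit κ₂.2) (h₂₂ : bracket κ₂ κ₂ = 0) (h₄₄ : bracket κ₄ κ₄ = 0)
    (h₃₁ : IsUnit (bracket κ₃ κ₁)) (h₂₄ : IsUnit (bracket κ₂ κ₄)) :
    Ring.inverse (bracket κ₃ κ₁) * reverse (bracket κ₂ κ₃) *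
        Ring.inverse (bracket κ₄ κ₂) * reverse (bracket κ₁ κ₄) +
      Ring.inverse (bracket κ₃ κ₁) * reverse (bracket κ₄ κ₃) *
        Ring.inverse (bracket κ₂ κ₄) * reverse (bracket κ₁ κ₂) = 1 := by
  have cramer : κ₁ = κ₂ <• (Ring.inverse (bracket κ₄ κ₂) * bracket κ₄ κ₁) +
      κ₄ <• (Ring.inverse (bracket κ₂ κ₄) * bracket κ₂ κ₁) :=
    eq_smul_add_smul_of_ker_subset
      (fun _ => exists_eq_smul_of_bracket_eq_zero hunit h₂₂) h₂₄ (isUnit_bracket_symm h₂₄) h₄₄ κ₁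
  have pluecker : bracket κ₃ κ₁ =
      bracket κ₃ κ₂ * (Ring.inverse (bracket κ₄ κ₂) * bracket κ₄ κ₁) +
        bracket κ₃ κ₄ * (Ring.inverse (bracket κ₂ κ₄) * bracket κ₂ κ₁) := by
    simpa only [map_add, map_smul, op_smul_eq_mul] using congrArg (bracket κ₃) cramer
  simp only [reverse_bracket, mul_neg, neg_mul, neg_neg, mul_assoc]
  rw [← mul_add, ← pluecker, Ring.inverse_mul_cancel _ h₃₁]

end Bracket

section Lipschitz

variable {Q : QuadraticForm ℝ M}

theorem mem_paravec_iff {p : CliffordAlgebra Q} :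
    p ∈ paravec Q ↔ ∃ (r : ℝ) (m : M), algebraMap ℝ (CliffordAlgebra Q) r + ι Q m = p := by
  simp [paravec, Submodule.mem_sup]

theorem reverse_eq_self_of_mem_paravec_s19 {p : CliffordAlgebra Q} (hp : p ∈ paravec Q) :
    reverse p = p := by
  obtain ⟨r, m, rfl⟩ := mem_paravec_iff.1 hp
  rw [map_add, reverse.commutes, reverse_ι]

theorem exists_star_mul_self_eq_of_mem_paravec {p : CliffordAlgebra Q} (hp : p ∈ paravec Q) :
    ∃ c : ℝ, star p * p = algebraMap ℝ _ c := by
  obtain ⟨r, m, rfl⟩ := mem_paravec_iff.1 hp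
  refine ⟨r * r - Q m, ?_⟩
  rw [star_add, star_algebraMap, star_ι, ← sub_eq_add_neg,
    ← (Algebra.commute_algebraMap_left r (ι Q m)).mul_self_sub_mul_self_eq', ι_sq_scalar, map_sub,
    map_mul]

theorem exists_star_mul_self_eq_of_mem_lipUnits {u : (CliffordAlgebra Q)ˣ}
    (hu : u ∈ lipUnits Q) :
    ∃ c : ℝ, star (u : CliffordAlgebra Q) * u = algebraMap ℝ _ c := by
  induction hu using Subgroup.closure_induction with
  | mem u hu => exact exists_star_mul_self_eq_of_mem_paravec hu
  | one => exact ⟨1, by simp⟩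
  | mul u v _ _ hu hv =>
    obtain ⟨c, hc⟩ := hu
    obtain ⟨d, hd⟩ := hv
    refine ⟨c * d, ?_⟩
    calc star (↑(u * v) : CliffordAlgebra Q) * ↑(u * v)
        = star (v : CliffordAlgebra Q) * (star (u : CliffordAlgebra Q) * u) * v := by
          simp only [Units.val_mul, star_mul, mul_assoc]
      _ = algebraMap ℝ _ (c * d) := by
          rw [hc, ← Algebra.commutes, mul_assoc, hd, map_mul]
  | inv u _ hu =>
    obtain ⟨c, hc⟩ := hu
    have hc0 : c ≠ 0 := by
      rintro rfl
      exact (u.isUnit.star.mul u.isUnit).ne_zero (by rw [hc, map_zero])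
    have hinv : (↑u⁻¹ : CliffordAlgebra Q) = c⁻¹ • star (u : CliffordAlgebra Q) :=
      Units.inv_eq_of_mul_eq_one_left <| by
        rw [smul_mul_assoc, hc, Algebra.smul_def, ← map_mul, inv_mul_cancel₀ hc0, map_one]
    refine ⟨c⁻¹, ?_⟩
    nth_rw 1 [hinv]
    rw [CliffordAlgebra.star_smul, star_star, smul_mul_assoc, Units.mul_inv,
      Algebra.algebraMap_eq_smul_one]

theorem IsSpinor.isUnit_or_isUnit {ξ η : CliffordAlgebra Q} (h : IsSpinor Q ξ η) :
    IsUnit ξ ∨ IsUnit η := by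
  obtain ⟨rfl | ⟨u, -, rfl⟩, rfl | ⟨v, -, rfl⟩, hne, -⟩ := h
  · exact absurd ⟨rfl, rfl⟩ hne
  · exact .inr v.isUnit
  · exact .inl u.isUnit
  · exact .inl u.isUnit

theorem IsSpinor.bracket_self {ξ η : CliffordAlgebra Q} (h : IsSpinor Q ξ η) :
    bracket (ξ, η) (ξ, η) = 0 := by
  obtain ⟨-, rfl | ⟨u, hu, rfl⟩, -, hpar⟩ := h
  · simp [bracket_apply]
  obtain ⟨c, hc⟩ := exists_star_mul_self_eq_of_mem_lipUnits hu
  have hsymm : involute (u : CliffordAlgebra Q) * reverse ξ =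
      ξ * star (u : CliffordAlgebra Q) := by
    simpa only [cconj, star_def, reverse.map_mul, reverse_reverse] using
      reverse_eq_self_of_mem_paravec_s19 hpar
  have hnorm : reverse (u : CliffordAlgebra Q) * involute (u : CliffordAlgebra Q) =
      algebraMap ℝ _ c := by
    simpa only [map_mul, star_def', involute_involute, AlgHom.commutes] using congrArg involute hc
  have hunit : IsUnit (algebraMap ℝ (CliffordAlgebra Q) c) := hc ▸ u.isUnit.star.mul u.isUnit
  rw [bracket_apply, sub_eq_zero]
  refine hunit.mul_left_cancel ?_
  calc algebraMap ℝ _ c * (reverse ξ * u)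
      = reverse (u : CliffordAlgebra Q) * (involute (u : CliffordAlgebra Q) * reverse ξ) * u := by
        simp only [← hnorm, mul_assoc]
    _ = reverse (u : CliffordAlgebra Q) * ξ * algebraMap ℝ _ c := by
        simp only [hsymm, ← hc, mul_assoc]
    _ = algebraMap ℝ _ c * (reverse (u : CliffordAlgebra Q) * ξ) := (Algebra.commutes _ _).symm

end Lipschitz

/-- **Noncommutative Ptolemy relation.** For four Lipschitz spinors
`κⱼ = (ξⱼ, ηⱼ)` with pairwise brackets `λⱼₖ = {κⱼ, κₖ} = ξⱼ^* ηₖ − ηⱼ^* ξₖ` all invertible,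
`λ₃₁⁻¹ λ₂₃^* λ₄₂⁻¹ λ₁₄^* + λ₃₁⁻¹ λ₄₃^* λ₂₄⁻¹ λ₁₂^* = 1`.
(Indices here run over `Fin 4`, so the paper's `1,2,3,4` are `0,1,2,3`.) -/
theorem noncommutative_ptolemy (n : ℕ) (ξ η : Fin 4 → CliffordAlgebra (negQ n))
    (hs : ∀ j, IsSpinor (negQ n) (ξ j) (η j))
    (lam : Fin 4 → Fin 4 → CliffordAlgebra (negQ n))
    (hlam : ∀ j k, lam j k = reverse (ξ j) * η k - reverse (η j) * ξ k)
    (hunit : ∀ j k, j ≠ k → IsUnit (lam j k)) :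
    Ring.inverse (lam 2 0) * reverse (lam 1 2) *
        Ring.inverse (lam 3 1) * reverse (lam 0 3) +
      Ring.inverse (lam 2 0) * reverse (lam 3 2) *
        Ring.inverse (lam 1 3) * reverse (lam 0 1) = 1 := by
  obtain rfl : lam = fun j k => bracket (ξ j, η j) (ξ k, η k) := funext₂ hlam
  exact noncommutative_ptolemy_general (hs 1).isUnit_or_isUnit (hs 1).bracket_self
    (hs 3).bracket_self (hunit 2 0 (by decide)) (hunit 1 3 (by decide))

end PaperCliff
end
end
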